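/- Let Γ be a finitely generated group and suppose N ⊴ Γ is a normal subgroup of finite index which is self-simulable. Then Γ is self-simulable. -/

import Mathlib

open scoped Pointwise

namespace SelfSim

/-- The left shift action of a group `G` on the full shift `G → A`:
`(g · x)(h) = x (g⁻¹ h)`. -/
def shift {G A : Type*} [Group G] (g : G) (x : G → A) : G → A := fun h => x (g⁻¹ * h)

/-- A `G`-subshift: a closed, shift-invariant subset of the full shift `G → A`
(`A` carrying its topology, `G → A` the product topology). -/
def IsSubshift {G A : Type*} [Group G] [TopologicalSpace A] (X : Set (G → A)) : Prop :=
  IsClosed X ∧ ∀ (g : G) (x : G → A), x ∈ X → shift g x ∈ X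

/-- A subshift of finite type: there are a finite set `F ⊆ G` and a set `𝓛` of patterns
on `F` such that `x ∈ X` iff every translate of `x` restricted to `F` lies in `𝓛`. -/
def IsSFT {G A : Type*} [Group G] (X : Set (G → A)) : Prop :=
  ∃ (F : Finset G) (L : Set (↥F → A)),
    ∀ x : G → A, x ∈ X ↔ ∀ g : G, (fun h : ↥F => x (g * (h : G))) ∈ L

/-- `φ` is a topological factor map from the shift action on `Z ⊆ G → A` onto the
action `act` of `G` on `Y ⊆ β`: continuous on `Z`, mapping `Z` into and onto `Y`,
and equivariant. -/
def IsFactorMapOnto {G A β : Type*} [Group G] [TopologicalSpace A] [TopologicalSpace β]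
    (Z : Set (G → A)) (φ : (G → A) → β) (act : G → β → β) (Y : Set β) : Prop :=
  ContinuousOn φ Z ∧ Set.MapsTo φ Z Y ∧ Set.SurjOn φ Z Y ∧
    ∀ (g : G) (x : G → A), x ∈ Z → φ (shift g x) = act g (φ x)

/-- A sofic subshift: a topological factor of some subshift of finite type
(over some finite alphabet, which we may take to be `Fin k`). -/
def IsSofic {G A : Type*} [Group G] [TopologicalSpace A] (Y : Set (G → A)) : Prop :=
  ∃ (k : ℕ) (Z : Set (G → Fin k)) (φ : (G → Fin k) → (G → A)),
    IsSFT Z ∧ IsFactorMapOnto Z φ shift Y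

/-- Recursively enumerable predicate. -/
def RE {α : Type*} [Primcodable α] (p : α → Prop) : Prop :=
  Partrec fun a => Part.assert (p a) fun _ => Part.some ()

/-- `x : ℕ → A` begins with the finite word `w`. -/
def ExtendsWord {A : Type*} (x : ℕ → A) (w : List A) : Prop :=
  ∀ i : Fin w.length, x i = w.get i

/-- A closed subset `Z ⊆ A^ℕ` is effectively closed if the set of words whose
cylinder is disjoint from `Z` is recursively enumerable. -/
def EffectivelyClosedSet {A : Type*} [Primcodable A] [TopologicalSpace A]
    (Z : Set (ℕ → A)) : Prop :=
  IsClosed Z ∧ RE fun w : List A => ∀ x : ℕ → A, ExtendsWord x w → x ∉ Z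

/-- `act` defines an action of `G` on the set `X ⊆ β`. -/
def IsActionOn {G β : Type*} [Group G] (act : G → β → β) (X : Set β) : Prop :=
  (∀ g : G, Set.MapsTo (act g) X X) ∧ (∀ x ∈ X, act 1 x = x) ∧
    ∀ (g h : G) (x : β), x ∈ X → act (g * h) x = act g (act h x)

/-- The set representation of the action `act` of `G` on `X ⊆ A^ℕ` with respect to the
finite generating tuple `s : Fin m → G` (playing the role of the generating set `S`):
the set of `y ∈ (A^S)^ℕ` of the form `y(n)(s) = (s · x)(n)` for some `x ∈ X`. -/
def SetRep {G A : Type*} [Group G] {m : ℕ} (s : Fin m → G)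
    (act : G → (ℕ → A) → ℕ → A) (X : Set (ℕ → A)) : Set (ℕ → (Fin m → A)) :=
  {y | ∃ x ∈ X, ∀ i : Fin m, (fun n => y n i) = act (s i) x}

/-- The action `act` of `G` on the closed set `X ⊆ A^ℕ` is effectively closed with respect
to the finite generating tuple `s` (which contains `1` and generates `G` as a monoid):
its set representation is an effectively closed subset of `(A^S)^ℕ`. -/
def IsEffClosedActionWith {G A : Type*} [Group G] [Primcodable A] [TopologicalSpace A]
    {m : ℕ} (s : Fin m → G) (act : G → (ℕ → A) → ℕ → A) (X : Set (ℕ → A)) : Prop :=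
  IsClosed X ∧ IsActionOn act X ∧ (∃ i, s i = 1) ∧
    Submonoid.closure (Set.range s) = ⊤ ∧
    EffectivelyClosedSet (SetRep s act X)

/-- The action `act` of `G` on `X ⊆ A^ℕ` is effectively closed (with respect to some
finite generating set containing `1`). -/
def IsEffClosedAction {G A : Type*} [Group G] [Primcodable A] [TopologicalSpace A]
    (act : G → (ℕ → A) → ℕ → A) (X : Set (ℕ → A)) : Prop :=
  ∃ (m : ℕ) (s : Fin m → G), IsEffClosedActionWith s act X

/-- The action `act` of `G` on `X ⊆ A^ℕ` is a topological factor of some `G`-subshift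
of finite type. -/
def IsFactorOfSFT {G A : Type*} [Group G] [TopologicalSpace A]
    (act : G → (ℕ → A) → ℕ → A) (X : Set (ℕ → A)) : Prop :=
  ∃ (k : ℕ) (Z : Set (G → Fin k)) (φ : (G → Fin k) → (ℕ → A)),
    IsSFT Z ∧ IsFactorMapOnto Z φ act X

/-- A group `G` is (dynamically) self-simulable if every effectively closed action of `G`
on a closed subset of `{0,1}^ℕ` is a topological factor of a `G`-subshift of finite type. -/
def SelfSimulable (G : Type*) [Group G] : Prop :=
  ∀ (X : Set (ℕ → Bool)) (act : G → (ℕ → Bool) → ℕ → Bool),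
    IsEffClosedAction act X → IsFactorOfSFT act X

/-- Amenability via the Følner condition: for every finite `K` and `δ > 0` there is a
nonempty finite `F` with `|KF △ F| ≤ δ |F|`. -/
def Amenable (G : Type*) [Group G] : Prop :=
  ∀ K : Set G, K.Finite → ∀ δ : ℝ, 0 < δ →
    ∃ F : Set G, F.Finite ∧ F.Nonempty ∧
      ((symmDiff (K * F) F).ncard : ℝ) ≤ δ * F.ncard

/-- A finitely generated group is recursively presented: for some finite tuple generating
`G` as a monoid, the set of words evaluating to the identity is recursively enumerable. -/
def RecursivelyPresented (G : Type*) [Group G] : Prop :=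
  ∃ (m : ℕ) (s : Fin m → G), Submonoid.closure (Set.range s) = ⊤ ∧
    RE fun w : List (Fin m) => (w.map s).prod = 1

/-- A finitely generated group has decidable word problem: for some finite tuple generating
`G` as a monoid, the set of words evaluating to the identity is decidable. -/
def DecidableWordProblem (G : Type*) [Group G] : Prop :=
  ∃ (m : ℕ) (s : Fin m → G), Submonoid.closure (Set.range s) = ⊤ ∧
    ComputablePred fun w : List (Fin m) => (w.map s).prod = 1

/-- A pattern coding `c` (a finite list of pairs (word over the generators, letter))
holds in the configuration `x` at position `g`: `x (g ⬝ w̲) = a` for every pair `(w, a)`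
of `c`. This says exactly that `x ∈ g·[c]`. -/
def PCHolds {G A : Type*} [Group G] {m : ℕ} (s : Fin m → G) (x : G → A) (g : G)
    (c : List (List (Fin m) × A)) : Prop :=
  ∀ p ∈ c, x (g * (p.1.map s).prod) = p.2

/-- A `G`-subshift `X ⊆ A^G` is effectively closed by patterns: for some finite generating
tuple `s`, there is a recursively enumerable set `𝒞` of pattern codings such that `X` is the
set of configurations avoiding every translate of every cylinder `[c]`, `c ∈ 𝒞`. -/
def EffClosedByPatterns {G A : Type*} [Group G] [Primcodable A] (X : Set (G → A)) : Prop :=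
  ∃ (m : ℕ) (s : Fin m → G), Submonoid.closure (Set.range s) = ⊤ ∧
    ∃ 𝒞 : Set (List (List (Fin m) × A)), RE (· ∈ 𝒞) ∧
      X = {x : G → A | ∀ (g : G) (c : List (List (Fin m) × A)), c ∈ 𝒞 → ¬ PCHolds s x g c}

/-- Word metric distance associated to a finite tuple `s` generating `G` as a monoid. -/
noncomputable def wordDist {G : Type*} [Group G] {m : ℕ} (s : Fin m → G) (g h : G) : ℕ :=
  sInf {n : ℕ | ∃ w : List (Fin m), w.length = n ∧ (w.map s).prod = g⁻¹ * h}

/-- Two finitely generated groups are quasi-isometric (with respect to word metrics given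
by some finite generating sets). -/
def QuasiIsometric (G₁ G₂ : Type*) [Group G₁] [Group G₂] : Prop :=
  ∃ (m₁ : ℕ) (s₁ : Fin m₁ → G₁) (m₂ : ℕ) (s₂ : Fin m₂ → G₂),
    Submonoid.closure (Set.range s₁) = ⊤ ∧ Submonoid.closure (Set.range s₂) = ⊤ ∧
    ∃ (f : G₂ → G₁) (A B C : ℝ), 1 ≤ A ∧ 0 ≤ B ∧ 0 ≤ C ∧
      (∀ x y : G₂,
        (1 / A) * (wordDist s₂ x y : ℝ) - B ≤ (wordDist s₁ (f x) (f y) : ℝ) ∧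
        (wordDist s₁ (f x) (f y) : ℝ) ≤ A * (wordDist s₂ x y : ℝ) + B) ∧
      ∀ z : G₁, ∃ x : G₂, (wordDist s₁ z (f x) : ℝ) ≤ C

/-- A finitely presented group: a quotient of a finitely generated free group by the
normal closure of finitely many relators. -/
def FinitelyPresentedGroup (G : Type*) [Group G] : Prop :=
  ∃ (m : ℕ) (f : FreeGroup (Fin m) →* G) (R : Finset (FreeGroup (Fin m))),
    Function.Surjective f ∧ f.ker = Subgroup.normalClosure (R : Set (FreeGroup (Fin m)))

/-- A subgroup `Δ ≤ G` is mediated: there is a finite generating set `T` of `G` such that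
`Δ ∩ tΔt⁻¹` is non-amenable for every `t ∈ T`. -/
def Mediated {G : Type*} [Group G] (Δ : Subgroup G) : Prop :=
  ∃ T : Finset G, Subgroup.closure (T : Set G) = ⊤ ∧
    ∀ t ∈ T, ¬ Amenable ↥(Δ ⊓ Subgroup.map (MulAut.conj t).toMonoidHom Δ)

end SelfSim

namespace SelfSim

/-!
Let `G` act effectively on `X`. The graph of each generator is a projection of the set
representation, and the graph of a product is a relational composition; since effectively closed
sets over finite alphabets are stable under intersections, letter-wise preimages and (by
compactness) letter-wise images, the graph of every element of `G` is effectively closed. Hence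
every element acts continuously, and the restriction of the action to `N` is again effectively
closed, so it is a factor `φ : Z → X` of an `N`-subshift of finite type `Z`.

A configuration `z` over `G` all of whose restrictions to left cosets of `N` lie in `Z` assigns to
each coset `q = g N` the point `g • φ (z (g ·))`, which does not depend on the representative `g`.
For `G ⧸ N` finite, a second layer recording the orbit of a point of `G ⧸ N` selects one coset in a
shift-equivariant way, and evaluating at that coset is the required factor map onto `X`.
-/

section ContinuousOn

variable {Y W : Type*} [TopologicalSpace Y] [TopologicalSpace W] {s : Set Y}

theorem continuousOn_of_isClosed_graphOn [CompactSpace W] {f : Y → W}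
    (hf : IsClosed (s.graphOn f)) : ContinuousOn f s := by
  refine continuousOn_iff_isClosed.2 fun t ht => ?_
  refine ⟨Prod.fst '' (s.graphOn f ∩ Prod.snd ⁻¹' t), ?_, ?_⟩
  · exact isClosedMap_fst_of_compactSpace _ (hf.inter (ht.preimage continuous_snd))
  · ext x
    simp [Set.mem_graphOn, and_comm]

theorem continuousOn_of_discrete_index {ι : Type*} [TopologicalSpace ι] [DiscreteTopology ι]
    {F : ι → Y → W} (hF : ∀ i, ContinuousOn (F i) s) {p : Y → ι} (hp : ContinuousOn p s) :
    ContinuousOn (fun y => F (p y) y) s := by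
  have hjoint : ContinuousOn (Function.uncurry F) (Set.univ ×ˢ s) :=
    continuousOn_prod_of_discrete_left.2 fun i => by simpa using! hF i
  exact hjoint.comp (hp.prodMk continuousOn_id) fun y hy => ⟨trivial, hy⟩

end ContinuousOn

section RecursivelyEnumerable

variable {α β : Type*} [Primcodable α] [Primcodable β]

theorem RE.of_eq {p q : α → Prop} (hp : RE p) (h : ∀ a, p a ↔ q a) : RE q :=
  REPred.of_eq hp h

theorem RE.exists_primrec_stages {p : α → Prop} (hp : RE p) :
    ∃ q : α → ℕ → Prop, PrimrecRel q ∧ (∀ a, Monotone (q a)) ∧ ∀ a, p a ↔ ∃ t, q a t := by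
  obtain ⟨c, hc⟩ := Nat.Partrec.Code.exists_code.1 hp
  have hdom (a : α) : p a ↔ (c.eval (Encodable.encode a)).Dom := by
    rw [hc]
    simp [Part.assert]
  refine ⟨fun a t => (c.evaln t (Encodable.encode a)).isSome, ?_, fun a t t' htt' h => ?_,
    fun a => ?_⟩
  · have h : Primrec fun x : α × ℕ => (c.evaln x.2 (Encodable.encode x.1)).isSome :=
      Primrec.option_isSome.comp (Nat.Partrec.Code.primrec_evaln.comp
        ((Primrec.snd.pair (Primrec.const c)).pair (Primrec.encode.comp Primrec.fst)))
    exact Primrec.primrecPred (h.of_eq fun x => by simp)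
  · obtain ⟨y, hy⟩ := Option.isSome_iff_exists.1 h
    exact Option.isSome_iff_exists.2 ⟨y, Nat.Partrec.Code.evaln_mono htt' hy⟩
  · simp only [hdom, Part.dom_iff_mem, Nat.Partrec.Code.evaln_complete,
      Option.isSome_iff_exists]
    exact exists_comm

theorem RE.of_primrecRel {q : α → ℕ → Prop} (hq : PrimrecRel q) : RE fun a => ∃ t, q a t := by
  classical
  have hfind : Partrec fun a => Nat.rfind fun t => Part.some (decide (q a t)) :=
    Partrec.rfind (Computable₂.partrec₂ hq.decide.to_comp)
  exact RE.of_eq hfind.dom_re fun a => Nat.rfind_dom.trans (by simp)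

theorem RE.of_primrecPred {p : α → Prop} (hp : PrimrecPred p) : RE p :=
  hp.computablePred.to_re

theorem RE.comp {p : β → Prop} (hp : RE p) {f : α → β} (hf : Computable f) :
    RE fun a => p (f a) :=
  Partrec.comp hp hf

theorem RE.or {p q : α → Prop} (hp : RE p) (hq : RE q) : RE fun a => p a ∨ q a := by
  obtain ⟨P, hP, -, hpP⟩ := hp.exists_primrec_stages
  obtain ⟨Q, hQ, -, hqQ⟩ := hq.exists_primrec_stages
  have hPQ : PrimrecRel fun a t => P a t ∨ Q a t := PrimrecPred.or hP hQ
  exact (RE.of_primrecRel hPQ).of_eq fun a => by rw [hpP, hqQ, exists_or]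

theorem RE.exists_nat {p : α × ℕ → Prop} (hp : RE p) : RE fun a => ∃ n, p (a, n) := by
  obtain ⟨q, hq, -, hpq⟩ := hp.exists_primrec_stages
  have hunpair : Primrec fun x : α × ℕ => x.2.unpair := Primrec.unpair.comp Primrec.snd
  have hq' : PrimrecRel fun (a : α) (k : ℕ) => q (a, k.unpair.1) k.unpair.2 :=
    hq.comp (Primrec.fst.pair (Primrec.fst.comp hunpair)) (Primrec.snd.comp hunpair)
  refine (RE.of_primrecRel hq').of_eq fun a => ?_
  simp only [hpq]
  constructor
  · rintro ⟨k, hk⟩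
    exact ⟨_, _, hk⟩
  · rintro ⟨n, t, h⟩
    exact ⟨Nat.pair n t, by simpa using h⟩

theorem RE.forall_mem_list {p : α → Prop} (hp : RE p) : RE fun l : List α => ∀ a ∈ l, p a := by
  obtain ⟨q, hq, hmono, hpq⟩ := hp.exists_primrec_stages
  refine (RE.of_primrecRel hq.forall_mem_list).of_eq fun l => ?_
  simp only [hpq]
  constructor
  · rintro ⟨t, ht⟩ a ha
    exact ⟨t, ht a ha⟩
  · intro h
    induction l with
    | nil => exact ⟨0, by simp⟩
    | cons a l ih =>
      obtain ⟨t, ht⟩ := h a List.mem_cons_self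
      obtain ⟨t', ht'⟩ := ih fun b hb => h b (List.mem_cons_of_mem a hb)
      refine ⟨max t t', List.forall_mem_cons.2 ⟨hmono a (le_max_left t t') ht, fun b hb => ?_⟩⟩
      exact hmono b (le_max_right t t') (ht' b hb)

end RecursivelyEnumerable

section Words

variable {A B : Type*}

/-- All words of length `n` over the finite alphabet `A`, as a list, so that quantifying over
them is a bounded quantification. -/
noncomputable def words (A : Type*) [Fintype A] : ℕ → List (List A)
  | 0 => [[]]
  | n + 1 => (words A n).flatMap fun w => Finset.univ.toList.map fun a => a :: w

theorem mem_words [Fintype A] {n : ℕ} {w : List A} : w ∈ words A n ↔ w.length = n := by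
  induction n generalizing w with
  | zero => simp [words]
  | succ n ih => cases w <;> simp [words, ih]

theorem primrec_words [Fintype A] [Primcodable A] : Primrec (words A) := by
  have hstep : Primrec₂ fun (_ : ℕ) (l : List (List A)) =>
      l.flatMap fun w => Finset.univ.toList.map fun a => a :: w :=
    Primrec.list_flatMap Primrec.snd (Primrec.list_map (Primrec.const _)
      (Primrec.list_cons.comp Primrec.snd (Primrec.snd.comp Primrec.fst)))
  refine (Primrec.nat_rec₁ [[]] hstep).of_eq fun n => ?_
  induction n with
  | zero => rfl
  | succ n ih => simp only [words, ih]

theorem RE.forall_mem_words_of_map_eq [Fintype A] [Primcodable A] [Primcodable B]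
    {p : List A → Prop} (hp : RE p) (f : A → B) :
    RE fun w : List B => ∀ v ∈ words A w.length, v.map f = w → p v := by
  have hlift : PrimrecRel fun (v : List A) (w : List B) => v.map f = w :=
    Primrec.eq.comp (Primrec.list_map Primrec.fst ((Primrec.dom_finite f).comp Primrec.snd))
      Primrec.snd
  have hpair : Primrec fun w : List B => (words A w.length).map fun v => (v, w) :=
    Primrec.list_map (primrec_words.comp Primrec.list_length) (Primrec.snd.pair Primrec.fst)
  have hforbidden : RE fun x : List A × List B => ¬ x.1.map f = x.2 ∨ p x.1 :=
    (RE.of_primrecPred hlift.not).or (hp.comp Computable.fst)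
  refine (hforbidden.forall_mem_list.comp hpair.to_comp).of_eq fun w => ?_
  simp only [List.forall_mem_map, ← imp_iff_not_or]

theorem extendsWord_iff_map_range_eq {x : ℕ → A} {w : List A} :
    ExtendsWord x w ↔ (List.range w.length).map x = w := by
  rw [List.ext_get_iff]
  simp [ExtendsWord, Fin.forall_iff]

theorem extendsWord_map_range (x : ℕ → A) (n : ℕ) : ExtendsWord x ((List.range n).map x) := by
  simp [extendsWord_iff_map_range_eq]

theorem ExtendsWord.map {x : ℕ → A} {w : List A} (h : ExtendsWord x w) (f : A → B) :
    ExtendsWord (f ∘ x) (w.map f) := by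
  rw [extendsWord_iff_map_range_eq] at h ⊢
  rw [List.length_map, ← List.map_map, h]

theorem ExtendsWord.take {x : ℕ → A} {w : List A} (h : ExtendsWord x w) (i : ℕ) :
    ExtendsWord x (w.take i) := by
  rw [extendsWord_iff_map_range_eq] at h ⊢
  rw [List.length_take, ← List.take_range, List.map_take, h]

theorem ExtendsWord.eq_take {x : ℕ → A} {v w : List A} (hv : ExtendsWord x v)
    (hw : ExtendsWord x w) (hvw : v.length ≤ w.length) : v = w.take v.length := by
  rw [extendsWord_iff_map_range_eq] at hv hw
  conv_rhs => rw [← hw, ← List.map_take, List.take_range, min_eq_left hvw, hv]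

theorem ExtendsWord.exists_append {x : ℕ → A} {w : List A} (h : ExtendsWord x w) (n : ℕ) :
    ∃ u : List A, u.length = n ∧ ExtendsWord x (w ++ u) := by
  refine ⟨(List.range n).map fun i => x (w.length + i), by simp, ?_⟩
  rw [extendsWord_iff_map_range_eq] at h ⊢
  simp [List.range_add, h, Function.comp_def]

theorem exists_extendsWord {w : List A} (hw : w ≠ []) : ∃ x : ℕ → A, ExtendsWord x w :=
  ⟨fun i => w.getD i (w.head hw), fun i => by simp⟩

variable [TopologicalSpace A]

theorem isClopen_setOf_extendsWord [DiscreteTopology A] (w : List A) :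
    IsClopen {x : ℕ → A | ExtendsWord x w} := by
  have hcylinder : {x : ℕ → A | ExtendsWord x w} =
      ⋂ i : Fin w.length, (fun x => x i) ⁻¹' {w.get i} := by
    ext x
    simp [ExtendsWord]
  rw [hcylinder]
  exact isClopen_iInter_of_finite fun i =>
    (isClopen_discrete {w.get i}).preimage (continuous_apply (i : ℕ))

theorem exists_extendsWord_of_notMem {Z : Set (ℕ → A)} (hZ : IsClosed Z) {x : ℕ → A}
    (hx : x ∉ Z) : ∃ w, ExtendsWord x w ∧ ∀ y, ExtendsWord y w → y ∉ Z := by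
  obtain ⟨I, U, hU, hIU⟩ := isOpen_pi_iff.1 hZ.isOpen_compl x hx
  obtain ⟨n, hn⟩ := I.exists_nat_subset_range
  refine ⟨(List.range n).map x, extendsWord_map_range x n, fun y hy => hIU fun i hi => ?_⟩
  have hin : i < n := Finset.mem_range.1 (hn hi)
  have hyx : y i = x i := by simpa using hy ⟨i, by simpa using hin⟩
  exact hyx ▸ (hU i hi).2

theorem exists_length_of_cylinder_covered [Finite A] [DiscreteTopology A] {P : List A → Prop}
    {w : List A} (hP : ∀ x, ExtendsWord x w → ∃ v, P v ∧ ExtendsWord x v) :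
    ∃ n, ∀ x, ExtendsWord x w → ∃ v, P v ∧ v.length ≤ n ∧ ExtendsWord x v := by
  let U (n : ℕ) : Set (ℕ → A) := ⋃ v ∈ {v : List A | P v ∧ v.length ≤ n}, {x | ExtendsWord x v}
  have hUopen (n : ℕ) : IsOpen (U n) :=
    isOpen_biUnion fun v _ => (isClopen_setOf_extendsWord v).isOpen
  have hUmono : Monotone U := fun m n hmn =>
    Set.biUnion_subset_biUnion_left fun v hv => ⟨hv.1, hv.2.trans hmn⟩
  have hcover : {x | ExtendsWord x w} ⊆ ⋃ n, U n := by
    intro x hx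
    obtain ⟨v, hv, hxv⟩ := hP x hx
    exact Set.mem_iUnion.2 ⟨v.length, Set.mem_biUnion ⟨hv, le_rfl⟩ hxv⟩
  obtain ⟨n, hn⟩ := (isClopen_setOf_extendsWord w).isClosed.isCompact.elim_directed_cover
    U hUopen hcover hUmono.directed_le
  refine ⟨n, fun x hx => ?_⟩
  obtain ⟨v, ⟨hv, hvn⟩, hxv⟩ := Set.mem_iUnion₂.1 (hn hx)
  exact ⟨v, hv, hvn, hxv⟩

theorem cylinder_disjoint_iff_exists_length [Fintype A] [DiscreteTopology A] {P : List A → Prop}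
    {Z : Set (ℕ → A)} (hZ : ∀ x, x ∈ Z ↔ ∀ w, P w → ¬ ExtendsWord x w) (w : List A) :
    (∀ x, ExtendsWord x w → x ∉ Z) ↔ ∃ n, ∀ u ∈ words A n, ∃ i, P ((w ++ u).take i) := by
  constructor
  · intro hw
    have hcover (x : ℕ → A) (hx : ExtendsWord x w) : ∃ v, P v ∧ ExtendsWord x v := by
      simpa only [hZ, not_forall, not_not, exists_prop] using hw x hx
    obtain ⟨n, hn⟩ := exists_length_of_cylinder_covered hcover
    -- Nonempty words `u` have infinite extensions even when `A` is not known to be inhabited.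
    refine ⟨n + 1, fun u hu => ?_⟩
    rw [mem_words] at hu
    obtain ⟨x, hx⟩ := exists_extendsWord (List.ne_nil_of_length_pos (l := w ++ u) (by simp [hu]))
    have hxw : ExtendsWord x w := by simpa using hx.take w.length
    obtain ⟨v, hv, hvn, hxv⟩ := hn x hxw
    exact ⟨v.length, hxv.eq_take hx (by grind) ▸ hv⟩
  · rintro ⟨n, hn⟩ x hx hxZ
    obtain ⟨u, hu, hxu⟩ := hx.exists_append n
    obtain ⟨i, hi⟩ := hn u (mem_words.2 hu)
    exact (hZ x).1 hxZ _ hi (hxu.take i)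

end Words

section EffectivelyClosed

variable {A B : Type*} [Primcodable A] [TopologicalSpace A] [Primcodable B] [TopologicalSpace B]

theorem EffectivelyClosedSet.mem_iff {Z : Set (ℕ → A)} (hZ : EffectivelyClosedSet Z)
    {x : ℕ → A} :
    x ∈ Z ↔ ∀ w, (∀ y, ExtendsWord y w → y ∉ Z) → ¬ ExtendsWord x w := by
  refine ⟨fun hx w hw hxw => hw x hxw hx, fun h => ?_⟩
  by_contra hx
  obtain ⟨w, hxw, hw⟩ := exists_extendsWord_of_notMem hZ.1 hx
  exact h w hw hxw

theorem EffectivelyClosedSet.of_mem_iff [Finite A] [DiscreteTopology A] {P : List A → Prop}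
    (hP : RE P) {Z : Set (ℕ → A)} (hZ : ∀ x, x ∈ Z ↔ ∀ w, P w → ¬ ExtendsWord x w) :
    EffectivelyClosedSet Z := by
  have := Fintype.ofFinite A
  refine ⟨?_, ?_⟩
  · have hZeq : Z = ⋂ w ∈ {w | P w}, {x | ExtendsWord x w}ᶜ := by
      ext x
      simp [hZ]
    rw [hZeq]
    exact isClosed_biInter fun w _ => (isClopen_setOf_extendsWord w).compl.isClosed
  · have hprefix : RE fun v : List A => ∃ i, P (v.take i) :=
      RE.exists_nat (hP.comp (Primrec.list_take.comp Primrec.snd Primrec.fst).to_comp)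
    have hext : Primrec fun x : List A × ℕ => (words A x.2).map (x.1 ++ ·) :=
      Primrec.list_map (primrec_words.comp Primrec.snd)
        (Primrec.list_append.comp (Primrec.fst.comp Primrec.fst) Primrec.snd)
    have hlength : RE fun x : List A × ℕ =>
        ∀ u ∈ words A x.2, ∃ i, P ((x.1 ++ u).take i) :=
      (hprefix.forall_mem_list.comp hext.to_comp).of_eq fun x => by
        simp only [List.forall_mem_map]
    refine (RE.exists_nat hlength).of_eq fun w => ?_
    rw [cylinder_disjoint_iff_exists_length hZ]

theorem EffectivelyClosedSet.univ [Finite A] [DiscreteTopology A] :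
    EffectivelyClosedSet (Set.univ : Set (ℕ → A)) := by
  have hfalse : PrimrecPred fun _ : List A => False :=
    Primrec.primrecPred ((Primrec.const false).of_eq fun _ => by simp)
  exact .of_mem_iff (P := fun _ => False) (.of_primrecPred hfalse) (by simp)

theorem EffectivelyClosedSet.inter [Finite A] [DiscreteTopology A] {Y Z : Set (ℕ → A)}
    (hY : EffectivelyClosedSet Y) (hZ : EffectivelyClosedSet Z) :
    EffectivelyClosedSet (Y ∩ Z) :=
  .of_mem_iff (hY.2.or hZ.2) fun x => by
    rw [Set.mem_inter_iff, hY.mem_iff, hZ.mem_iff, ← forall_and]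
    exact forall_congr' fun w => or_imp.symm

theorem EffectivelyClosedSet.iInter [Finite A] [DiscreteTopology A] {ι : Type*} [Finite ι]
    {Z : ι → Set (ℕ → A)} (hZ : ∀ i, EffectivelyClosedSet (Z i)) :
    EffectivelyClosedSet (⋂ i, Z i) := by
  classical
  have := Fintype.ofFinite ι
  have hbiInter (s : Finset ι) : EffectivelyClosedSet (⋂ i ∈ s, Z i) := by
    induction s using Finset.induction_on with
    | empty => simpa using EffectivelyClosedSet.univ
    | insert i s _ ih => simpa only [Finset.set_biInter_insert] using (hZ i).inter ih
  simpa using hbiInter Finset.univ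

theorem EffectivelyClosedSet.preimage_comp [Finite B] [DiscreteTopology B]
    {Z : Set (ℕ → A)} (hZ : EffectivelyClosedSet Z) (f : B → A) :
    EffectivelyClosedSet ((f ∘ ·) ⁻¹' Z) := by
  have hf : Computable (List.map f) :=
    (Primrec.list_map Primrec.id ((Primrec.dom_finite f).comp Primrec.snd).to₂).to_comp
  refine .of_mem_iff (hZ.2.comp hf) fun x => ?_
  rw [Set.mem_preimage, hZ.mem_iff]
  constructor
  · exact fun h w hw hxw => h _ hw (hxw.map f)
  · intro h w hw hxw
    refine h ((List.range w.length).map x) ?_ (extendsWord_map_range x w.length)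
    rwa [List.map_map, extendsWord_iff_map_range_eq.1 hxw]

theorem EffectivelyClosedSet.image_comp [Finite A] [DiscreteTopology A] [Finite B]
    [DiscreteTopology B] {Z : Set (ℕ → A)} (hZ : EffectivelyClosedSet Z) (f : A → B) :
    EffectivelyClosedSet ((f ∘ ·) '' Z) := by
  have := Fintype.ofFinite A
  refine .of_mem_iff (hZ.2.forall_mem_words_of_map_eq f) fun y => ⟨?_, fun hy => ?_⟩
  · rintro ⟨x, hx, rfl⟩ w hw hxw
    refine hw ((List.range w.length).map x) (by simp [mem_words]) ?_ x
      (extendsWord_map_range x w.length) hx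
    rw [List.map_map, extendsWord_iff_map_range_eq.1 hxw]
  · by_contra hyZ
    have hclosed : IsClosed ((f ∘ · : (ℕ → A) → ℕ → B) '' Z) :=
      (hZ.1.isCompact.image (by fun_prop)).isClosed
    obtain ⟨w, hyw, hw⟩ := exists_extendsWord_of_notMem hclosed hyZ
    refine hy w (fun v _ hvw x hx hxZ => ?_) hyw
    exact hw (f ∘ x) (hvw ▸ hx.map f) ⟨x, hxZ, rfl⟩

end EffectivelyClosed

section SetRepresentation

variable {G A : Type*} [Group G] {act : G → (ℕ → A) → ℕ → A} {X : Set (ℕ → A)}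

theorem mem_setRep_pair (hact : IsActionOn act X) {g : G} {y : ℕ → Fin 2 → A} :
    y ∈ SetRep ![1, g] act X ↔
      (fun n => y n 0) ∈ X ∧ (fun n => y n 1) = act g fun n => y n 0 := by
  constructor
  · rintro ⟨x, hx, hy⟩
    have hyx : (fun n => y n 0) = x := (hy 0).trans (hact.2.1 x hx)
    exact ⟨hyx ▸ hx, hyx ▸ hy 1⟩
  · rintro ⟨hx, hy⟩
    exact ⟨_, hx, Fin.forall_fin_two.2 ⟨(hact.2.1 _ hx).symm, hy⟩⟩

theorem setRep_comp {k m : ℕ} (s : Fin m → G) (σ : Fin k → Fin m) :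
    SetRep (s ∘ σ) act X =
      ((fun b : Fin m → A => b ∘ σ) ∘ ·) '' SetRep s act X := by
  ext y
  constructor
  · rintro ⟨x, hx, hy⟩
    refine ⟨fun n i => act (s i) x n, ⟨x, hx, fun i => rfl⟩, ?_⟩
    funext n i
    exact (congrFun (hy i) n).symm
  · rintro ⟨z, ⟨x, hx, hz⟩, rfl⟩
    exact ⟨x, hx, fun i => hz (σ i)⟩

theorem setRep_pair_mul (hact : IsActionOn act X) (g h : G) :
    SetRep ![1, g * h] act X =
      ((fun b : Fin 3 → A => b ∘ ![0, 2]) ∘ ·) ''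
        (((fun b : Fin 3 → A => b ∘ ![0, 1]) ∘ ·) ⁻¹' SetRep ![1, h] act X ∩
          ((fun b : Fin 3 → A => b ∘ ![1, 2]) ∘ ·) ⁻¹' SetRep ![1, g] act X) := by
  ext y
  constructor
  · intro hy
    obtain ⟨hx, hxy⟩ := (mem_setRep_pair hact).1 hy
    let x : ℕ → A := fun n => y n 0
    refine ⟨fun n => ![x n, act h x n, act g (act h x) n], ⟨?_, ?_⟩, ?_⟩
    · exact (mem_setRep_pair hact).2 ⟨hx, rfl⟩
    · exact (mem_setRep_pair hact).2 ⟨hact.1 h hx, rfl⟩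
    · funext n i
      fin_cases i
      · rfl
      · exact (congrFun (hxy.trans (hact.2.2 g h x hx)) n).symm
  · rintro ⟨z, ⟨hzh, hzg⟩, rfl⟩
    obtain ⟨hx, hh⟩ := (mem_setRep_pair hact).1 hzh
    obtain ⟨-, hg⟩ := (mem_setRep_pair hact).1 hzg
    refine (mem_setRep_pair hact).2 ⟨hx, hg.trans ?_⟩
    exact (congrArg (act g) hh).trans (hact.2.2 g h _ hx).symm

theorem setRep_eq_iInter (hact : IsActionOn act X) {m : ℕ} {s : Fin m → G} {i₀ : Fin m}
    (hi₀ : s i₀ = 1) :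
    SetRep s act X =
      ⋂ i, ((fun b : Fin m → A => b ∘ ![i₀, i]) ∘ ·) ⁻¹' SetRep ![1, s i] act X := by
  ext y
  simp only [Set.mem_iInter, Set.mem_preimage, mem_setRep_pair hact]
  constructor
  · rintro ⟨x, hx, hy⟩ i
    have hyx : (fun n => y n i₀) = x := (hy i₀).trans (hi₀ ▸ hact.2.1 x hx)
    exact ⟨hyx ▸ hx, hyx ▸ hy i⟩
  · intro hy
    exact ⟨fun n => y n i₀, (hy i₀).1, fun i => (hy i).2⟩

variable [Primcodable A] [TopologicalSpace A]

theorem IsEffClosedAction.isActionOn (h : IsEffClosedAction act X) : IsActionOn act X := by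
  obtain ⟨-, -, -, hact, -⟩ := h
  exact hact

variable [Finite A] [DiscreteTopology A]

theorem IsEffClosedAction.effectivelyClosedSet_setRep_pair (h : IsEffClosedAction act X) (g : G) :
    EffectivelyClosedSet (SetRep ![1, g] act X) := by
  obtain ⟨m, s, -, hact, ⟨i₀, hi₀⟩, hs, hrep⟩ := h
  have hgen (i : Fin m) : EffectivelyClosedSet (SetRep ![1, s i] act X) := by
    have hcomp : ![1, s i] = s ∘ ![i₀, i] := by
      funext j
      fin_cases j
      · exact hi₀.symm
      · rfl
    rw [hcomp, setRep_comp]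
    exact hrep.image_comp _
  have hg : g ∈ Submonoid.closure (Set.range s) := hs ▸ Submonoid.mem_top g
  induction hg using Submonoid.closure_induction with
  | mem _ hmem =>
    obtain ⟨i, rfl⟩ := hmem
    exact hgen i
  | one => exact hi₀ ▸ hgen i₀
  | mul a b _ _ ha hb =>
    rw [setRep_pair_mul hact]
    exact ((hb.preimage_comp _).inter (ha.preimage_comp _)).image_comp _

theorem IsEffClosedAction.effectivelyClosedSet_setRep (h : IsEffClosedAction act X) {m : ℕ}
    {s : Fin m → G} {i₀ : Fin m} (hi₀ : s i₀ = 1) : EffectivelyClosedSet (SetRep s act X) := by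
  rw [setRep_eq_iInter h.isActionOn hi₀]
  exact .iInter fun i => (h.effectivelyClosedSet_setRep_pair (s i)).preimage_comp _

theorem IsEffClosedAction.comp_monoidHom {H : Type*} [Group H] [Group.FG H]
    (h : IsEffClosedAction act X) (f : H →* G) :
    IsEffClosedAction (fun a => act (f a)) X := by
  have hact := h.isActionOn
  obtain ⟨S, hS⟩ := (Group.fg_iff_monoid_fg.1 ‹Group.FG H›).fg_top
  let s : Fin (S.card + 1) → H := Fin.cons 1 (Subtype.val ∘ S.equivFin.symm)
  have hrange : Set.range s = insert 1 (S : Set H) := by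
    rw [Fin.range_cons, EquivLike.range_comp]
    exact congrArg (insert 1) Subtype.range_coe
  have hclosure : Submonoid.closure (Set.range s) = ⊤ :=
    top_unique (hS ▸ Submonoid.closure_mono (hrange ▸ Set.subset_insert 1 _))
  refine ⟨_, s, ?_, ⟨fun a => hact.1 (f a), ?_, fun a b x hx => ?_⟩, ⟨0, rfl⟩, hclosure, ?_⟩
  · obtain ⟨-, -, hX, -⟩ := h
    exact hX
  · simpa using hact.2.1
  · exact (congrArg (act · x) (map_mul f a b)).trans (hact.2.2 _ _ x hx)
  · exact h.effectivelyClosedSet_setRep (s := f ∘ s) (i₀ := 0) (map_one f)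

theorem IsEffClosedAction.continuousOn (h : IsEffClosedAction act X) (g : G) :
    ContinuousOn (act g) X := by
  refine continuousOn_of_isClosed_graphOn ?_
  have hgraph : X.graphOn (act g) =
      (fun p n => ![p.1 n, p.2 n]) ⁻¹' SetRep ![1, g] act X := by
    ext p
    rw [Set.mem_preimage, mem_setRep_pair h.isActionOn, Set.mem_graphOn]
    exact and_congr_right' eq_comm
  rw [hgraph]
  refine (h.effectivelyClosedSet_setRep_pair g).1.preimage ?_
  fun_prop

end SetRepresentation

section FiniteType

variable {G A B : Type*} [Group G]

theorem isSFT_iff_dependsOn {X : Set (G → A)} :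
    IsSFT X ↔ ∃ (F : Finset G) (Q : Set (G → A)), DependsOn (· ∈ Q) (F : Set G) ∧
      ∀ x, x ∈ X ↔ ∀ g, (fun h => x (g * h)) ∈ Q := by
  constructor
  · rintro ⟨F, L, hX⟩
    refine ⟨F, {x | (fun h : F => x h) ∈ L}, fun x y hxy => ?_, hX⟩
    have hFxy : (fun h : F => x h) = fun h : F => y h := funext fun h => hxy h h.2
    exact congrArg (· ∈ L) hFxy
  · rintro ⟨F, Q, hQ, hX⟩
    refine ⟨F, {p | ∃ x ∈ Q, (fun h : F => x h) = p}, fun x => (hX x).trans ?_⟩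
    refine forall_congr' fun g => ⟨fun hx => ⟨_, hx, rfl⟩, ?_⟩
    rintro ⟨y, hy, hyx⟩
    exact (hQ fun h hh => congrFun hyx ⟨h, hh⟩).mp hy

theorem IsSFT.shift_mem {X : Set (G → A)} (hX : IsSFT X) (g : G) {x : G → A} (hx : x ∈ X) :
    shift g x ∈ X := by
  obtain ⟨F, L, hX⟩ := hX
  refine (hX _).2 fun a => ?_
  simpa only [shift, mul_assoc] using (hX x).1 hx (g⁻¹ * a)

theorem IsSFT.preimage_comp {X : Set (G → A)} (hX : IsSFT X) (f : B → A) :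
    IsSFT ((f ∘ ·) ⁻¹' X : Set (G → B)) := by
  obtain ⟨F, L, hX⟩ := hX
  exact ⟨F, (f ∘ ·) ⁻¹' L, fun x => hX (f ∘ x)⟩

theorem IsSFT.inter {X Y : Set (G → A)} (hX : IsSFT X) (hY : IsSFT Y) : IsSFT (X ∩ Y) := by
  classical
  rw [isSFT_iff_dependsOn] at hX hY ⊢
  obtain ⟨F, P, hP, hX⟩ := hX
  obtain ⟨E, Q, hQ, hY⟩ := hY
  refine ⟨F ∪ E, P ∩ Q, fun x y hxy => ?_, fun x => ?_⟩
  · have hFxy := hP fun h hh => hxy h (Finset.mem_union_left E hh)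
    have hExy := hQ fun h hh => hxy h (Finset.mem_union_right F hh)
    exact congrArg₂ And hFxy hExy
  · rw [Set.mem_inter_iff, hX, hY, ← forall_and]
    rfl

theorem IsFactorMapOnto.isFactorOfSFT {C : Type*} [Finite B] [TopologicalSpace B]
    [TopologicalSpace C] {Z : Set (G → B)} {φ : (G → B) → ℕ → C}
    {act : G → (ℕ → C) → ℕ → C} {X : Set (ℕ → C)} (hφ : IsFactorMapOnto Z φ act X)
    (hZ : IsSFT Z) : IsFactorOfSFT act X := by
  obtain ⟨k, ⟨e⟩⟩ := Finite.exists_equiv_fin B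
  obtain ⟨hcont, hmaps, hsurj, hequiv⟩ := hφ
  have hrecode : Continuous fun z : G → Fin k => e.symm ∘ z := by fun_prop
  refine ⟨k, _, fun z => φ (e.symm ∘ z), hZ.preimage_comp e.symm, ?_, ?_, ?_, ?_⟩
  · exact hcont.comp hrecode.continuousOn fun z hz => hz
  · exact fun z hz => hmaps hz
  · intro x hx
    obtain ⟨z, hz, rfl⟩ := hsurj hx
    have hez : e.symm ∘ e ∘ z = z := by simp [← Function.comp_assoc]
    exact ⟨e ∘ z, (hez.symm ▸ hz : e.symm ∘ e ∘ z ∈ Z), congrArg φ hez⟩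
  · exact fun g z hz => hequiv g (e.symm ∘ z) hz

/-- The configurations `g ↦ g⁻¹ • q` for `q : Q`: the subshift over the alphabet `Q` that is
conjugate to the action of `G` on `Q` through evaluation at `1`. -/
def orbitSubshift (G Q : Type*) [Group G] [MulAction G Q] : Set (G → Q) :=
  {c | ∀ g h, c (g * h) = h⁻¹ • c g}

theorem isSFT_orbitSubshift [Group.FG G] (Q : Type*) [MulAction G Q] :
    IsSFT (orbitSubshift G Q) := by
  classical
  obtain ⟨S, hS⟩ := (Group.fg_iff_monoid_fg.1 ‹Group.FG G›).fg_top
  refine isSFT_iff_dependsOn.2 ⟨insert 1 S, {c | ∀ s ∈ S, c s = s⁻¹ • c 1},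
    fun c d hcd => ?_, fun c => ⟨fun hc g s _ => ?_, fun hc g h => ?_⟩⟩
  · refine propext (forall₂_congr fun s hs => ?_)
    rw [hcd s (by simp [hs]), hcd 1 (by simp)]
  · simpa using hc g s
  · have hh : h ∈ Submonoid.closure (S : Set G) := hS ▸ Submonoid.mem_top h
    induction hh using Submonoid.closure_induction_right with
    | one => simp
    | mul_right a _ s hs ih =>
      rw [← mul_assoc, mul_inv_rev, mul_smul, ← ih]
      simpa using hc (g * a) s hs

theorem orbitSubshift_apply_inv {Q : Type*} [MulAction G Q] {c : G → Q}
    (hc : c ∈ orbitSubshift G Q) (g : G) : c g⁻¹ = g • c 1 := by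
  simpa using hc 1 g⁻¹

end FiniteType

section Induction

variable {G A : Type*} [Group G] (N : Subgroup G)

/-- The restriction of `z : G → A` to the left coset `g N`, read as a configuration over `N`
based at `g`. -/
def cosetRestrict (z : G → A) (g : G) : N → A := fun n => z (g * n)

/-- The `G`-subshift induced from an `N`-subshift `Z`: the configurations whose restriction to
every left coset of `N` belongs to `Z`. -/
def inducedSubshift (Z : Set (N → A)) : Set (G → A) := {z | ∀ g, cosetRestrict N z g ∈ Z}

theorem cosetRestrict_shift (g : G) (z : G → A) (h : G) :
    cosetRestrict N (shift g z) h = cosetRestrict N z (g⁻¹ * h) := by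
  funext n
  simp only [cosetRestrict, shift, mul_assoc]

theorem cosetRestrict_mul (z : G → A) (g : G) (n : N) :
    cosetRestrict N z (g * n) = shift n⁻¹ (cosetRestrict N z g) := by
  funext n
  simp only [cosetRestrict, shift, mul_assoc, inv_inv, Subgroup.coe_mul]

theorem continuous_cosetRestrict [TopologicalSpace A] (g : G) :
    Continuous fun z : G → A => cosetRestrict N z g :=
  continuous_pi fun n => continuous_apply (g * n)

variable {N} {Z : Set (N → A)}

theorem IsSFT.inducedSubshift (hZ : IsSFT Z) : IsSFT (inducedSubshift N Z) := by
  obtain ⟨F, Q, hQ, hZ⟩ := isSFT_iff_dependsOn.1 hZ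
  refine isSFT_iff_dependsOn.2 ⟨F.map (Function.Embedding.subtype _),
    {z | (fun n : N => z n) ∈ Q}, fun x y hxy => ?_, fun z => ?_⟩
  · exact hQ fun n hn => hxy n (by simpa using hn)
  · constructor
    · intro hz g
      simpa [cosetRestrict] using (hZ _).1 (hz g) 1
    · intro hz g
      refine (hZ _).2 fun n => ?_
      have hgn : (fun m : N => z (g * n * m)) ∈ Q := hz (g * n)
      simpa only [cosetRestrict, Subgroup.coe_mul, mul_assoc] using hgn

theorem exists_mem_inducedSubshift (hZ : ∀ n, ∀ z ∈ Z, shift n z ∈ Z) {z₀ : N → A}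
    (hz₀ : z₀ ∈ Z) : ∃ z ∈ inducedSubshift N Z, ∀ q : G ⧸ N, cosetRestrict N z q.out = z₀ := by
  have hmem (g : G) : (g : G ⧸ N).out⁻¹ * g ∈ N := QuotientGroup.eq.1 (g : G ⧸ N).out_eq'
  let offset (g : G) : N := ⟨(g : G ⧸ N).out⁻¹ * g, hmem g⟩
  have hoffset (g : G) (n : N) : offset (g * n) = offset g * n :=
    Subtype.ext (by simp [offset, mul_assoc])
  refine ⟨z₀ ∘ offset, fun g => ?_, fun q => ?_⟩
  · have hz : cosetRestrict N (z₀ ∘ offset) g = shift (offset g)⁻¹ z₀ := by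
      funext n
      simp [cosetRestrict, shift, hoffset]
    exact hz ▸ hZ _ _ hz₀
  · have hone : offset q.out = 1 := Subtype.ext (by simp [offset])
    funext n
    simp [cosetRestrict, hoffset, hone]

variable {β : Type*} (act : G → β → β) (φ : (N → A) → β)

/-- The point of the `G`-system which `φ` reads off the coset `g N` of `z`, transported back to
the base point by `g`. -/
def cosetValue (z : G → A) (g : G) : β := act g (φ (cosetRestrict N z g))

variable {act φ} {X : Set β}

theorem cosetValue_shift (hact : IsActionOn act X) (hφ : Set.MapsTo φ Z X) {z : G → A}
    (hz : z ∈ inducedSubshift N Z) (g h : G) :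
    cosetValue act φ (shift g z) h = act g (cosetValue act φ z (g⁻¹ * h)) := by
  have hmul := hact.2.2 g (g⁻¹ * h) _ (hφ (hz (g⁻¹ * h)))
  rw [mul_inv_cancel_left] at hmul
  rw [cosetValue, cosetRestrict_shift, hmul, cosetValue]

theorem cosetValue_eq_of_mk_eq (hact : IsActionOn act X) (hmaps : Set.MapsTo φ Z X)
    (hequiv : ∀ (n : N), ∀ z ∈ Z, φ (shift n z) = act n (φ z)) {z : G → A}
    (hz : z ∈ inducedSubshift N Z) {g h : G} (hgh : (g : G ⧸ N) = h) :
    cosetValue act φ z g = cosetValue act φ z h := by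
  obtain ⟨n, rfl⟩ : ∃ n : N, h = g * n := ⟨⟨_, QuotientGroup.eq.1 hgh⟩, by simp⟩
  have hmul := hact.2.2 (g * n) (n⁻¹ : N) _ (hmaps (hz g))
  rw [Subgroup.coe_inv, mul_inv_cancel_right] at hmul
  rw [cosetValue, hmul, cosetValue, cosetRestrict_mul, hequiv _ _ (hz g), Subgroup.coe_inv]

variable [TopologicalSpace A] [TopologicalSpace β]

theorem continuousOn_cosetValue (hcont : ∀ g, ContinuousOn (act g) X) (hφ : ContinuousOn φ Z)
    (hmaps : Set.MapsTo φ Z X) (g : G) :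
    ContinuousOn (fun z => cosetValue act φ z g) (inducedSubshift N Z) :=
  (hcont g).comp (hφ.comp (continuous_cosetRestrict N g).continuousOn fun _ hz => hz g)
    fun _ hz => hmaps (hz g)

/-- The simulating subshift over the alphabet `A × G ⧸ N`: the second layer singles out a left
coset of `N`, moved by `G` under the shift, and the first layer carries a point of `Z` on every
coset. -/
def pointedInducedSubshift (Z : Set (N → A)) : Set (G → A × G ⧸ N) :=
  (Prod.fst ∘ ·) ⁻¹' inducedSubshift N Z ∩ (Prod.snd ∘ ·) ⁻¹' orbitSubshift G (G ⧸ N)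

theorem isFactorMapOnto_pointedInducedSubshift [TopologicalSpace (G ⧸ N)]
    [DiscreteTopology (G ⧸ N)] (hact : IsActionOn act X) (hcont : ∀ g, ContinuousOn (act g) X)
    (hZ : ∀ n, ∀ z ∈ Z, shift n z ∈ Z) (hφ : IsFactorMapOnto Z φ (fun n => act n) X) :
    IsFactorMapOnto (pointedInducedSubshift Z)
      (fun z => cosetValue act φ (Prod.fst ∘ z) (z 1).2.out) act X := by
  obtain ⟨hφcont, hmaps, hsurj, hequiv⟩ := hφ
  refine ⟨?_, fun z hz => hact.1 _ (hmaps (hz.1 _)), fun x hx => ?_, fun g z hz => ?_⟩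
  · have hcoset (q : G ⧸ N) : ContinuousOn (fun z => cosetValue act φ (Prod.fst ∘ z) q.out)
        (pointedInducedSubshift Z) :=
      (continuousOn_cosetValue hcont hφcont hmaps q.out).comp
        (f := fun z : G → A × G ⧸ N => Prod.fst ∘ z) (by fun_prop) fun _ hz => hz.1
    exact continuousOn_of_discrete_index hcoset (p := fun z => (z 1).2) (by fun_prop)
  · let q₀ : G ⧸ N := (1 : G)
    obtain ⟨z₀, hz₀, hx₀⟩ := hsurj (hact.1 q₀.out⁻¹ hx)
    obtain ⟨z, hz, hzz₀⟩ := exists_mem_inducedSubshift hZ hz₀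
    refine ⟨fun g => (z g, g⁻¹ • q₀), ⟨hz, fun g h => ?_⟩, ?_⟩
    · simp [mul_smul]
    · have hx₁ := hact.2.2 q₀.out q₀.out⁻¹ x hx
      rw [mul_inv_cancel, hact.2.1 x hx, ← hx₀, ← hzz₀ q₀] at hx₁
      simpa using! hx₁.symm
  · have hmove : (shift g z 1).2 = g • (z 1).2 := by
      simpa [shift] using orbitSubshift_apply_inv hz.2 g
    have hcoset : ((g⁻¹ * (g • (z 1).2).out : G) : G ⧸ N) = ((z 1).2.out : G) := by
      rw [QuotientGroup.out_eq']
      exact (MulAction.Quotient.mk_smul_out (H := N) g⁻¹ _).trans (inv_smul_smul g (z 1).2)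
    calc cosetValue act φ (shift g (Prod.fst ∘ z)) (shift g z 1).2.out
        = act g (cosetValue act φ (Prod.fst ∘ z) (g⁻¹ * (g • (z 1).2).out)) := by
          rw [cosetValue_shift hact hmaps hz.1, hmove]
      _ = act g (cosetValue act φ (Prod.fst ∘ z) (z 1).2.out) := by
          rw [cosetValue_eq_of_mk_eq hact hmaps hequiv hz.1 hcoset]

end Induction

theorem IsFactorOfSFT.of_subgroup {G A : Type*} [Group G] [Group.FG G] {N : Subgroup G}
    [N.FiniteIndex] [TopologicalSpace A] {act : G → (ℕ → A) → ℕ → A} {X : Set (ℕ → A)}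
    (hact : IsActionOn act X) (hcont : ∀ g, ContinuousOn (act g) X)
    (h : IsFactorOfSFT (fun n : N => act n) X) : IsFactorOfSFT act X := by
  let _ : TopologicalSpace (G ⧸ N) := ⊥
  have : DiscreteTopology (G ⧸ N) := ⟨rfl⟩
  obtain ⟨k, Z, φ, hZ, hφ⟩ := h
  refine (isFactorMapOnto_pointedInducedSubshift hact hcont
    (fun n _ hz => hZ.shift_mem n hz) hφ).isFactorOfSFT ?_
  exact (hZ.inducedSubshift.preimage_comp Prod.fst).inter
    ((isSFT_orbitSubshift (G ⧸ N)).preimage_comp Prod.snd)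

theorem selfSimulable_of_normal_finiteIndex_general {G : Type*} [Group G] [Group.FG G]
    (N : Subgroup G) [N.FiniteIndex] (hss : SelfSimulable N) : SelfSimulable G := by
  intro X act h
  have : Group.FG N := N.fg_of_index_ne_zero
  exact (hss X _ (h.comp_monoidHom N.subtype)).of_subgroup h.isActionOn h.continuousOn

/-- A finitely generated group with a normal finite index self-simulable
subgroup is self-simulable. -/
theorem selfSimulable_of_normal_finiteIndex
    (G : Type*) [Group G] (hfg : Group.FG G)
    (N : Subgroup G) (hnorm : N.Normal) (hfi : N.FiniteIndex)
    (hss : SelfSimulable ↥N) :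
    SelfSimulable G :=
  selfSimulable_of_normal_finiteIndex_general N hss

end SelfSim
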